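/- arXiv:1505.02003 — 2 statements merged into one kernel-verified Lean document; each statement's English description precedes it below -/
import Mathlib

section
/- Let s ∈ ℕ and let u = (u_j)_{j≥1} be a nonincreasing sequence of positive reals. Then there exist positive constants c_{5,s} and c_{6,s}, depending on s and u but not on n, such that e(n, s, S_{s,u}) ≤ c_{5,s}·exp(−c_{6,s}·(log n)²) for all n ∈ ℕ. -/
open MeasureTheory Matrix Filter
open scoped ENNReal BigOperators Topology

noncomputable section

/-- The `b`-adic digit of `k : ℕ` at place `b^i` (i.e. the `(i+1)`-st digit). -/
def natDigit (b k i : ℕ) : ℕ := k / b ^ i % b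

/-- The `(i+1)`-st `b`-adic digit of a real number `x ∈ [0,1)`
(using the expansion in which infinitely many digits differ from `b-1`). -/
def realDigit (b : ℕ) (x : ℝ) (i : ℕ) : ℕ := (⌊x * (b : ℝ) ^ (i + 1)⌋ % (b : ℤ)).toNat

/-- The `k`-th one-dimensional `b`-adic Walsh function. -/
def wal1 (b k : ℕ) (x : ℝ) : ℂ :=
  Complex.exp (2 * Real.pi * Complex.I / (b : ℂ) *
    ((∑ i ∈ Finset.range k, natDigit b k i * realDigit b x i : ℕ) : ℂ))

/-- The `k`-th `s`-dimensional `b`-adic Walsh function. -/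
def wal (b : ℕ) {s : ℕ} (k : Fin s → ℕ) (x : Fin s → ℝ) : ℂ :=
  ∏ j, wal1 b (k j) (x j)

/-- The unit cube `[0,1)^s`. -/
def unitCube (s : ℕ) : Set (Fin s → ℝ) := Set.univ.pi fun _ => Set.Ico (0 : ℝ) 1

/-- The `k`-th Walsh coefficient of `f`. -/
def walshCoeff (b : ℕ) {s : ℕ} (f : (Fin s → ℝ) → ℝ) (k : Fin s → ℕ) : ℂ :=
  ∫ x in unitCube s, (f x : ℂ) * (starRingEnd ℂ) (wal b k x)

/-- The generalized Dick weight `μ_a(k)`, one-dimensional case. -/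
def dickWt (b : ℕ) (a : ℝ) (k : ℕ) : ℝ :=
  ∑ i ∈ Finset.range k, if natDigit b k i ≠ 0 then ((i : ℝ) + 1 + a) else 0

/-- The generalized Dick weight `μ_a(k)` for vectors. -/
def dickWtV (b : ℕ) {s : ℕ} (a : Fin s → ℝ) (k : Fin s → ℕ) : ℝ :=
  ∑ j, dickWt b (a j) (k j)

/-- The modified Dick weight `μ'_a(k)`, one-dimensional case. -/
def mdickWt (b : ℕ) (a : ℝ) (k : ℕ) : ℝ :=
  ∑ i ∈ Finset.range k, if natDigit b k i ≠ 0 then max ((i : ℝ) + 1 + a) 1 else 0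

/-- The modified Dick weight `μ'_a(k)` for vectors. -/
def mdickWtV (b : ℕ) {s : ℕ} (a : Fin s → ℝ) (k : Fin s → ℕ) : ℝ :=
  ∑ j, mdickWt b (a j) (k j)

/-- Digitwise subtraction modulo `b` of natural numbers. -/
def dsub (b k k' : ℕ) : ℕ :=
  ∑ i ∈ Finset.range (k + k' + 1), ((natDigit b k i + (b - natDigit b k' i)) % b) * b ^ i

/-- The integral of `f` over the unit cube. -/
def intBox (s : ℕ) (f : (Fin s → ℝ) → ℝ) : ℝ := ∫ x in unitCube s, f x

/-- Membership in the Walsh space `W_{s,a}`: `f` equals its (convergent) Walsh series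
and has finite norm. -/
def MemW (b : ℕ) {s : ℕ} (a : Fin s → ℝ) (f : (Fin s → ℝ) → ℝ) : Prop :=
  (∀ x ∈ unitCube s, HasSum (fun k : Fin s → ℕ => walshCoeff b f k * wal b k x) ((f x : ℂ))) ∧
  BddAbove (Set.range fun k : Fin s → ℕ => ‖walshCoeff b f k‖ * (b : ℝ) ^ dickWtV b a k)

/-- The norm of the Walsh space `W_{s,a}`. -/
def normW (b : ℕ) {s : ℕ} (a : Fin s → ℝ) (f : (Fin s → ℝ) → ℝ) : ℝ :=
  ⨆ k : Fin s → ℕ, ‖walshCoeff b f k‖ * (b : ℝ) ^ dickWtV b a k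

/-- Membership in the modified Walsh space `W'_{s,a}`. -/
def MemW' (b : ℕ) {s : ℕ} (a : Fin s → ℝ) (f : (Fin s → ℝ) → ℝ) : Prop :=
  (∀ x ∈ unitCube s, HasSum (fun k : Fin s → ℕ => walshCoeff b f k * wal b k x) ((f x : ℂ))) ∧
  BddAbove (Set.range fun k : Fin s → ℕ => ‖walshCoeff b f k‖ * (b : ℝ) ^ mdickWtV b a k)

/-- The norm of the modified Walsh space `W'_{s,a}`. -/
def normW' (b : ℕ) {s : ℕ} (a : Fin s → ℝ) (f : (Fin s → ℝ) → ℝ) : ℝ :=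
  ⨆ k : Fin s → ℕ, ‖walshCoeff b f k‖ * (b : ℝ) ^ mdickWtV b a k

/-- The worst-case error of the algorithm `A` over the unit ball of `(H, N)`. -/
def worstErr (s : ℕ) (H : Set ((Fin s → ℝ) → ℝ)) (N : ((Fin s → ℝ) → ℝ) → ℝ)
    (A : ((Fin s → ℝ) → ℝ) → ℝ) : ℝ≥0∞ :=
  ⨆ (f : (Fin s → ℝ) → ℝ) (_ : f ∈ H) (_ : N f ≤ 1), ENNReal.ofReal |intBox s f - A f|

/-- The `n`-th minimal worst-case error over all algorithms using `n` function values
at points of the unit cube. -/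
def minErr (n s : ℕ) (H : Set ((Fin s → ℝ) → ℝ)) (N : ((Fin s → ℝ) → ℝ) → ℝ) : ℝ≥0∞ :=
  ⨅ (t : Fin n → Fin s → ℝ) (_ : ∀ i, t i ∈ unitCube s) (φ : (Fin n → ℝ) → ℝ),
    worstErr s H N fun f => φ fun i => f (t i)

/-- Partial derivative in the `j`-th coordinate. -/
def pd {s : ℕ} (j : Fin s) (f : (Fin s → ℝ) → ℝ) : (Fin s → ℝ) → ℝ :=
  fun x => deriv (fun t => f (Function.update x j t)) (x j)

/-- The mixed partial derivative `f^{(α)}`. -/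
def mpd {s : ℕ} (α : Fin s → ℕ) (f : (Fin s → ℝ) → ℝ) : (Fin s → ℝ) → ℝ :=
  (List.finRange s).foldr (fun j g => (pd j)^[α j] g) f

/-- Membership in the space `S_{s,u}` of smooth functions. -/
def MemS {s : ℕ} (u : Fin s → ℝ) (f : (Fin s → ℝ) → ℝ) : Prop :=
  ContDiff ℝ (⊤ : ℕ∞) f ∧
  BddAbove (Set.range fun α : Fin s → ℕ =>
    (∫ x in unitCube s, |mpd α f x|) / ∏ j, u j ^ α j)

/-- The norm of the space `S_{s,u}`. -/
def normS {s : ℕ} (u : Fin s → ℝ) (f : (Fin s → ℝ) → ℝ) : ℝ :=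
  ⨆ α : Fin s → ℕ, (∫ x in unitCube s, |mpd α f x|) / ∏ j, u j ^ α j

/-- The column vector of the first `m` `b`-adic digits of `k`. -/
def trunc (b m k : ℕ) : Fin m → ZMod b := fun i => (natDigit b k (i : ℕ) : ZMod b)

/-- The `m`-th point of the digital net determined by generating matrices `G`. -/
def netPoint (b : ℕ) {s l d : ℕ} (G : Fin s → Matrix (Fin l) (Fin d) (ZMod b)) (m : ℕ) :
    Fin s → ℝ :=
  fun j => ∑ i : Fin l, (((G j).mulVec (trunc b d m)) i).val / (b : ℝ) ^ ((i : ℕ) + 1)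

/-- The dual net of the digital net determined by `G`. -/
def dualNet (b : ℕ) {s l d : ℕ} (G : Fin s → Matrix (Fin l) (Fin d) (ZMod b)) :
    Set (Fin s → ℕ) :=
  {k | ∑ j, (G j)ᵀ.mulVec (trunc b l (k j)) = 0}

/-- The QMC algorithm given by the digital net with generating matrices `G`. -/
def qmcNet (b : ℕ) {s l d : ℕ} (G : Fin s → Matrix (Fin l) (Fin d) (ZMod b))
    (f : (Fin s → ℝ) → ℝ) : ℝ :=
  ((b : ℝ) ^ d)⁻¹ * ∑ m ∈ Finset.range (b ^ d), f (netPoint b G m)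

/-- `n_j = #{i ∈ ℕ : i + a ≤ 1}` (with `i` ranging over positive integers). -/
def negCount (a : ℝ) : ℕ := Set.ncard {i : ℕ | 0 < i ∧ (i : ℝ) + a ≤ 1}

lemma oneD (σ L M : ℝ) (hσ : 0 < σ) (hL : 0 ≤ L) (a : ℝ) : ∀ (k : ℕ) (G : ℕ → ℝ → ℝ)
    (_ : ∀ i t, HasDerivAt (G i) (G (i+1) t) t) (ε : ℝ) (_ : 0 ≤ ε) (p : ℕ → ℝ)
    (_ : ∀ i, i < 2^k → p i ∈ Set.Icc a (a+L))
    (_ : ∀ i, i + 1 < 2^k → p i + σ ≤ p (i+1))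
    (_ : ∀ i, i < 2^k → |G 0 (p i)| ≤ ε)
    (_ : ∀ t ∈ Set.Icc a (a+L), |G k t| ≤ M),
    ∀ t ∈ Set.Icc a (a+L), |G 0 t| ≤ (1 + 2*L/σ)^k * ε + L^k * M := by
  intro k
  induction k with
  | zero =>
    intro G hG ε hε p hp hps hpe hM t ht
    have := hM t ht
    simp; linarith
  | succ k ih =>
    intro G hG ε hε p hp hps hpe hM t ht
    have key : ∀ i, i < 2^k → ∃ q ∈ Set.Ioo (p (2*i)) (p (2*i+1)), |G 1 q| ≤ 2*ε/σ := by
      intro i hi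
      have h1 : 2*i+1 < 2^(k+1) := by rw [pow_succ]; omega
      have h2 := hps (2*i) h1
      have hlt : p (2*i) < p (2*i+1) := by linarith
      obtain ⟨q, hq, hq'⟩ := exists_hasDerivAt_eq_slope (G 0) (G 1) hlt
        (fun t _ => (hG 0 t).continuousAt.continuousWithinAt) (fun t _ => hG 0 t)
      refine ⟨q, hq, ?_⟩
      rw [hq', abs_div, abs_of_pos (show 0 < p (2*i+1) - p (2*i) by linarith)]
      have e1 := hpe _ h1
      have e2 := hpe (2*i) (by omega)
      have e3 := abs_sub (G 0 (p (2*i+1))) (G 0 (p (2*i)))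
      apply div_le_div₀ (by linarith) (by linarith) hσ (by linarith)
    choose! q hq hq' using key
    have hB := ih (fun i => G (i+1)) (fun i t => hG (i+1) t) (2*ε/σ) (by positivity) q
      (by
        intro i hi
        have h1 : 2*i+1 < 2^(k+1) := by rw [pow_succ]; omega
        have := hq i hi
        have a1 := hp _ h1
        have a2 := hp (2*i) (by omega)
        exact ⟨a2.1.trans this.1.le, this.2.le.trans a1.2⟩)
      (by
        intro i hi
        have h1 : 2*(i+1)+1 < 2^(k+1) := by rw [pow_succ]; omega
        have b1 := hq i (by omega)
        have b2 := hq (i+1) hi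
        have b3 := hps (2*i+1) (by omega)
        have b4 : p (2*i+1+1) = p (2*(i+1)) := by congr 1
        have := b1.2
        have := b2.1
        linarith)
      hq' hM
    have h0 : 0 < 2^(k+1) := by positivity
    have hp0 := hp 0 h0
    have mv := (convex_Icc a (a+L)).norm_image_sub_le_of_norm_hasDerivWithin_le
      (fun x _ => (hG 0 x).hasDerivWithinAt) (fun x hx => by simpa using hB x hx) hp0 ht
    rw [Real.norm_eq_abs, Real.norm_eq_abs] at mv
    have hd : |t - p 0| ≤ L := by
      rw [abs_le]; constructor <;> linarith [hp0.1, hp0.2, ht.1, ht.2]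
    set B := (1 + 2*L/σ)^k * (2*ε/σ) + L^k * M with hBdef
    have hB0 : 0 ≤ B := (abs_nonneg _).trans (hB t ht)
    have h3 : |G 0 t| ≤ ε + B * L := by
      have := hpe 0 h0
      have h4 := abs_sub_abs_le_abs_sub (G 0 t) (G 0 (p 0))
      have := mul_le_mul_of_nonneg_left hd hB0
      linarith
    refine h3.trans ?_
    have hR : 0 ≤ 2*L/σ := by positivity
    have h5 : 1 ≤ (1 + 2*L/σ)^k := one_le_pow₀ (by linarith)
    have h6 : B * L = (1 + 2*L/σ)^k * (2*L/σ) * ε + L^(k+1)*M := by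
      rw [hBdef]; ring
    rw [h6, pow_succ (1 + 2*L/σ) k]
    nlinarith [mul_le_mul_of_nonneg_right h5 hε]

/-- smooth functions -/
abbrev Sm {s : ℕ} (f : (Fin s → ℝ) → ℝ) : Prop := ContDiff ℝ (⊤ : ℕ∞) f

lemma update_eq_add {s : ℕ} (x : Fin s → ℝ) (j : Fin s) (t : ℝ) :
    Function.update x j t = x + (t - x j) • (Pi.single j (1:ℝ) : Fin s → ℝ) := by
  ext i
  by_cases h : i = j
  · subst h; simp
  · simp [h]

lemma hasDerivAt_upd {s : ℕ} (f : (Fin s → ℝ) → ℝ) (hf : Sm f) (x : Fin s → ℝ) (j : Fin s) (t : ℝ) :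
    HasDerivAt (fun t => f (Function.update x j t))
      (fderiv ℝ f (Function.update x j t) (Pi.single j 1)) t := by
  have h1 : HasDerivAt (fun t => Function.update x j t) (Pi.single j (1:ℝ) : Fin s → ℝ) t :=
    hasDerivAt_update x j t
  have h2 := ((hf.differentiable (by simp)) (Function.update x j t)).hasFDerivAt
  exact h2.comp_hasDerivAt t h1

lemma pd_eq {s : ℕ} (f : (Fin s → ℝ) → ℝ) (hf : Sm f) (j : Fin s) :
    pd j f = fun x => fderiv ℝ f x (Pi.single j 1) := by
  ext x
  have := (hasDerivAt_upd f hf x j (x j)).deriv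
  simpa [pd] using this

lemma Sm.pd {s : ℕ} {f : (Fin s → ℝ) → ℝ} (hf : Sm f) (j : Fin s) : Sm (pd j f) := by
  rw [pd_eq f hf]
  exact (hf.fderiv_right (m := (⊤ : ℕ∞)) (by simp)).clm_apply contDiff_const

lemma hasDerivAt_pd {s : ℕ} (f : (Fin s → ℝ) → ℝ) (hf : Sm f) (x : Fin s → ℝ) (j : Fin s) (t : ℝ) :
    HasDerivAt (fun t => f (Function.update x j t)) (pd j f (Function.update x j t)) t := by
  rw [pd_eq f hf]; exact hasDerivAt_upd f hf x j t

lemma Sm.iter {s : ℕ} {f : (Fin s → ℝ) → ℝ} (hf : Sm f) (j : Fin s) (k : ℕ) : Sm ((_root_.pd j)^[k] f) := by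
  induction k with
  | zero => exact hf
  | succ k ih => rw [Function.iterate_succ_apply']; exact ih.pd j

lemma pd_comm {s : ℕ} (f : (Fin s → ℝ) → ℝ) (hf : Sm f) (i j : Fin s) :
    pd i (pd j f) = pd j (pd i f) := by
  rw [pd_eq _ (hf.pd j), pd_eq _ (hf.pd i), pd_eq f hf, pd_eq f hf]
  ext x
  have hd : DifferentiableAt ℝ (fderiv ℝ f) x :=
    ((hf.fderiv_right (m := (⊤ : ℕ∞)) (by simp)).differentiable (by simp)) x
  rw [fderiv_clm_apply hd (by fun_prop), fderiv_clm_apply hd (by fun_prop)]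
  have hs : IsSymmSndFDerivAt ℝ f x := hf.contDiffAt.isSymmSndFDerivAt (by
    simp only [minSmoothness_of_isRCLikeNormedField]; exact WithTop.coe_le_coe.2 le_top)
  simpa using hs.eq _ _

lemma pd_iter_comm {s : ℕ} (f : (Fin s → ℝ) → ℝ) (hf : Sm f) (i j : Fin s) (k : ℕ) :
    pd i ((pd j)^[k] f) = (pd j)^[k] (pd i f) := by
  induction k with
  | zero => rfl
  | succ k ih =>
    rw [Function.iterate_succ_apply', Function.iterate_succ_apply', pd_comm _ (hf.iter j k), ih]

lemma Sm.foldr {s : ℕ} {f : (Fin s → ℝ) → ℝ} (hf : Sm f) (α : Fin s → ℕ) (l : List (Fin s)) :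
    Sm (l.foldr (fun j g => (_root_.pd j)^[α j] g) f) := by
  induction l with
  | nil => exact hf
  | cons a l ih => exact ih.iter a _

lemma foldr_congr' {s : ℕ} {f : (Fin s → ℝ) → ℝ} (α β : Fin s → ℕ) (l : List (Fin s))
    (h : ∀ i ∈ l, α i = β i) :
    l.foldr (fun j g => (pd j)^[α j] g) f = l.foldr (fun j g => (pd j)^[β j] g) f := by
  induction l with
  | nil => rfl
  | cons a l ih =>
    simp only [List.foldr_cons]
    rw [ih (fun i hi => h i (List.mem_cons_of_mem _ hi)), h a List.mem_cons_self]

lemma pd_foldr {s : ℕ} {f : (Fin s → ℝ) → ℝ} (hf : Sm f) (α : Fin s → ℕ) (j : Fin s)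
    (l : List (Fin s)) (hl : l.Nodup) (hj : j ∈ l) :
    pd j (l.foldr (fun j g => (pd j)^[α j] g) f) =
      l.foldr (fun i g => (pd i)^[(α + (Pi.single j 1 : Fin s → ℕ)) i] g) f := by
  induction l with
  | nil => simp at hj
  | cons a l ih =>
    simp only [List.foldr_cons]
    rw [List.nodup_cons] at hl
    by_cases h : j = a
    · subst h
      rw [foldr_congr' (α + (Pi.single j 1 : Fin s → ℕ)) α l]
      · simp [Function.iterate_succ_apply']
      · intro i hi
        have : i ≠ j := fun e => hl.1 (e ▸ hi)
        simp [this]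
    · have hj' : j ∈ l := by simpa [h] using hj
      rw [pd_iter_comm _ (hf.foldr α l), ih hl.2 hj']
      have : a ≠ j := fun e => h e.symm
      simp [this]

lemma pd_mpd {s : ℕ} {f : (Fin s → ℝ) → ℝ} (hf : Sm f) (α : Fin s → ℕ) (j : Fin s) :
    pd j (mpd α f) = mpd (α + Pi.single j 1) f :=
  pd_foldr hf α j _ (List.nodup_finRange s) (List.mem_finRange j)

lemma mpd_zero {s : ℕ} (f : (Fin s → ℝ) → ℝ) : mpd 0 f = f := by
  unfold mpd
  induction (List.finRange s) with
  | nil => rfl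
  | cons a l ih => simp

lemma iter_pd {s : ℕ} {f : (Fin s → ℝ) → ℝ} (hf : Sm f) (j : Fin s) (k : ℕ) :
    (pd j)^[k] f = mpd (Pi.single j k) f := by
  induction k with
  | zero => simp [mpd_zero]
  | succ k ih =>
    rw [Function.iterate_succ_apply', ih, pd_mpd hf, ← Pi.single_add]

lemma sob1 (g g' : ℝ → ℝ) (hg : ∀ t, HasDerivAt g (g' t) t) (hc : Continuous g') (y : ℝ)
    (hy : y ∈ Set.Icc (0:ℝ) 1) :
    ‖g y‖ₑ ≤ (∫⁻ t in Set.Ico (0:ℝ) 1, ‖g t‖ₑ) + ∫⁻ t in Set.Ico (0:ℝ) 1, ‖g' t‖ₑ := by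
  have h1 : ∀ t ∈ Set.Ico (0:ℝ) 1, ‖g y‖ₑ ≤ ‖g t‖ₑ + ∫⁻ t in Set.Ico (0:ℝ) 1, ‖g' t‖ₑ := by
    intro t ht
    have e : g y = g t + ∫ z in t..y, g' z := by
      rw [intervalIntegral.integral_eq_sub_of_hasDerivAt (fun x _ => hg x) (hc.intervalIntegrable _ _)]
      ring
    rw [e]
    refine (enorm_add_le _ _).trans ?_
    gcongr
    have : ‖∫ z in t..y, g' z‖ₑ ≤ ∫⁻ z in Set.uIoc t y, ‖g' z‖ₑ := by
      rw [intervalIntegral.intervalIntegral_eq_integral_uIoc]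
      split_ifs
      · simpa using enorm_integral_le_lintegral_enorm _
      · simpa using enorm_integral_le_lintegral_enorm _
    refine this.trans ?_
    rw [setLIntegral_congr (Ico_ae_eq_Ioc (a := (0:ℝ)) (b := 1))]
    apply lintegral_mono_set
    intro z hz
    rw [Set.mem_uIoc] at hz
    rcases hz with hz | hz
    · exact ⟨ht.1.trans_lt hz.1, hz.2.trans hy.2⟩
    · exact ⟨hy.1.trans_lt hz.1, hz.2.trans ht.2.le⟩
  have hgc : Continuous g := continuous_iff_continuousAt.2 fun t => (hg t).continuousAt
  calc ‖g y‖ₑ = ∫⁻ t in Set.Ico (0:ℝ) 1, ‖g y‖ₑ := by simp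
    _ ≤ ∫⁻ t in Set.Ico (0:ℝ) 1, (‖g t‖ₑ + ∫⁻ t in Set.Ico (0:ℝ) 1, ‖g' t‖ₑ) :=
        setLIntegral_mono' measurableSet_Ico h1
    _ = _ := by
        rw [lintegral_add_left (by fun_prop)]
        simp

/-- the one-dimensional measure -/
abbrev mu01 {s : ℕ} : Fin s → Measure ℝ := fun _ => volume.restrict (Set.Ico (0:ℝ) 1)

lemma Sm.mpd {s : ℕ} {f : (Fin s → ℝ) → ℝ} (hf : Sm f) (α : Fin s → ℕ) : Sm (mpd α f) :=
  hf.foldr α _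

lemma sobS {s : ℕ} (v : Fin s → ℝ≥0∞) (f : (Fin s → ℝ) → ℝ) (hf : Sm f)
    (H : ∀ α : Fin s → ℕ, ∫⁻ x in unitCube s, ‖mpd α f x‖ₑ ≤ ∏ j, v j ^ α j) (S : Finset (Fin s)) :
    ∀ α : Fin s → ℕ, ∀ x : Fin s → ℝ, (∀ j, x j ∈ Set.Icc (0:ℝ) 1) →
      (∫⋯∫⁻_Sᶜ, (fun y => ‖mpd α f y‖ₑ) ∂mu01) x ≤ (∏ j, v j ^ α j) * ∏ j ∈ S, (1 + v j) := by
  induction S using Finset.induction_on with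
  | empty =>
    intro α x hx
    rw [Finset.compl_empty, lmarginal_univ]
    simp only [Finset.prod_empty, mul_one]
    refine le_trans (le_of_eq ?_) (H α)
    rw [unitCube, volume_pi, ← Measure.restrict_pi_pi]
  | insert j S hj ih =>
    intro α x hx
    set T := (insert j S)ᶜ with hT
    have hjT : j ∉ T := by simp [hT]
    have hST : Sᶜ = insert j T := by
      ext i; by_cases h : i = j <;> simp [hT, h, hj]
    have hmeas : ∀ β : Fin s → ℕ, Measurable (fun y => ‖mpd β f y‖ₑ) := fun β =>
      (hf.mpd β).continuous.measurable.enorm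
    have step : (∫⋯∫⁻_T, (fun y => ‖mpd α f y‖ₑ) ∂mu01) x ≤
        (∫⋯∫⁻_Sᶜ, (fun y => ‖mpd α f y‖ₑ) ∂mu01) x +
        (∫⋯∫⁻_Sᶜ, (fun y => ‖mpd (α + Pi.single j 1) f y‖ₑ) ∂mu01) x := by
      rw [hST, lmarginal_insert' _ (hmeas _) hjT, lmarginal_insert' _ (hmeas _) hjT]
      unfold lmarginal
      rw [← lintegral_add_left]
      · apply lintegral_mono
        intro y
        have hy : Function.updateFinset x T y j ∈ Set.Icc (0:ℝ) 1 := by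
          simp [Function.updateFinset, hjT, (hx j).1, (hx j).2]
        have := sob1 (fun t => mpd α f (Function.update (Function.updateFinset x T y) j t))
          (fun t => mpd (α + Pi.single j 1) f (Function.update (Function.updateFinset x T y) j t))
          (fun t => by
            rw [← pd_mpd hf]; exact hasDerivAt_pd _ (hf.mpd α) _ j t)
          ((hf.mpd _).continuous.comp (by fun_prop)) _ hy
        simpa using this
      · have : Measurable (fun x : Fin s → ℝ => ∫⁻ t, ‖mpd α f (Function.update x j t)‖ₑ ∂(mu01 j)) := by
          have h2 : Measurable (∫⋯∫⁻_{j}, (fun y => ‖mpd α f y‖ₑ) ∂mu01) := (hmeas α).lmarginal _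
          simpa [lmarginal_singleton] using h2
        exact this.comp measurable_updateFinset
    refine step.trans ((add_le_add (ih α x hx) (ih _ x hx)).trans ?_)
    rw [Finset.prod_insert hj]
    have : ∏ i, v i ^ (α + (Pi.single j 1 : Fin s → ℕ)) i = (∏ i, v i ^ α i) * v j := by
      simp only [Pi.add_apply, pow_add, Finset.prod_mul_distrib]
      congr 1
      rw [Finset.prod_eq_single j] <;> simp +contextual
    rw [this]
    apply le_of_eq; ring

lemma isCompact_box (s : ℕ) : IsCompact (Set.univ.pi fun _ : Fin s => Set.Icc (0:ℝ) 1) :=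
  isCompact_univ_pi fun _ => isCompact_Icc

lemma intOn {s : ℕ} {f : (Fin s → ℝ) → ℝ} (hf : Continuous f) : IntegrableOn f (unitCube s) :=
  (hf.continuousOn.integrableOn_compact (isCompact_box s)).mono_set
    (Set.pi_mono fun _ _ => Set.Ico_subset_Icc_self)

lemma supBound {s : ℕ} (u : Fin s → ℝ) (hu : ∀ j, 0 < u j) (f : (Fin s → ℝ) → ℝ) (hf : MemS u f)
    (hn : normS u f ≤ 1) (j : Fin s) (k : ℕ) (x : Fin s → ℝ) (hx : ∀ j, x j ∈ Set.Icc (0:ℝ) 1) :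
    |(pd j)^[k] f x| ≤ u j ^ k * ∏ i, (1 + u i) := by
  have H : ∀ α : Fin s → ℕ, ∫⁻ x in unitCube s, ‖mpd α f x‖ₑ ≤ ∏ j, (ENNReal.ofReal (u j)) ^ α j := by
    intro α
    have h1 : (∫ x in unitCube s, |mpd α f x|) / ∏ j, u j ^ α j ≤ 1 := (le_ciSup hf.2 α).trans hn
    have hp : 0 < ∏ j, u j ^ α j := Finset.prod_pos fun i _ => pow_pos (hu i) _
    rw [div_le_one hp] at h1
    have h2 := ofReal_integral_norm_eq_lintegral_enorm (intOn (Sm.mpd hf.1 α).continuous)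
    rw [← h2]
    refine (ENNReal.ofReal_le_ofReal h1).trans (le_of_eq ?_)
    rw [ENNReal.ofReal_prod_of_nonneg (fun i _ => pow_nonneg (hu i).le _)]
    exact Finset.prod_congr rfl fun i _ => ENNReal.ofReal_pow (hu i).le _
  have := sobS _ f hf.1 H Finset.univ (Pi.single j k) x hx
  rw [Finset.compl_univ, lmarginal_empty] at this
  have e1 : ∏ i, (ENNReal.ofReal (u i)) ^ (Pi.single j k : Fin s → ℕ) i = ENNReal.ofReal (u j ^ k) := by
    rw [Finset.prod_eq_single j]
    · simp [ENNReal.ofReal_pow (hu j).le]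
    · intro b _ hb; simp [hb]
    · simp
  have e2 : ∏ i, (1 + ENNReal.ofReal (u i)) = ENNReal.ofReal (∏ i, (1 + u i)) := by
    rw [ENNReal.ofReal_prod_of_nonneg (fun i _ => by linarith [hu i])]
    refine Finset.prod_congr rfl fun i _ => ?_
    rw [ENNReal.ofReal_add zero_le_one (hu i).le, ENNReal.ofReal_one]
  rw [e1, e2, ← ENNReal.ofReal_mul (pow_nonneg (hu j).le _), ← iter_pd hf.1,
    Real.enorm_eq_ofReal_abs, ENNReal.ofReal_le_ofReal_iff] at this
  · exact this
  · exact mul_nonneg (pow_nonneg (hu j).le _) (Finset.prod_nonneg fun i _ => by linarith [hu i])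

lemma gridBound {s : ℕ} (f g : (Fin s → ℝ) → ℝ) (hf : Sm f) (hg : Sm g) (k a : ℕ) (M : ℝ) (hM : 0 ≤ M)
    (bf : ∀ j x, (∀ j, x j ∈ Set.Icc (0:ℝ) 1) → |(pd j)^[k] f x| ≤ M)
    (bg : ∀ j x, (∀ j, x j ∈ Set.Icc (0:ℝ) 1) → |(pd j)^[k] g x| ≤ M)
    (heq : ∀ r : Fin s → Fin (2^(a*k) * 2^k),
      f (fun j => (r j : ℝ) / (2^(a*k) * 2^k)) = g (fun j => (r j : ℝ) / (2^(a*k) * 2^k)))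
    (i : ℕ) (hi : i ≤ s) : ∀ x : Fin s → ℝ, (∀ j, x j ∈ Set.Icc (0:ℝ) 1) →
      (∀ j : Fin s, i ≤ j → ∃ r : Fin (2^(a*k) * 2^k), x j = (r : ℝ) / (2^(a*k) * 2^k)) →
      |f x - g x| ≤ i * ((1 + 2 * 2^k)^k)^i * ((1/2^(a*k))^k * (2*M)) := by
  induction i with
  | zero =>
    intro x hx hr
    choose r hr using fun j => hr j (Nat.zero_le _)
    have : x = fun j => (r j : ℝ) / (2^(a*k) * 2^k) := funext hr
    rw [this, heq]; simp
  | succ i ih =>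
    intro x hx hr
    have ih := ih (by omega)
    set W : ℝ := (1 + 2 * 2^k)^k with hW
    set δ : ℝ := (1/2^(a*k))^k * (2*M) with hδ
    set K : ℕ := 2^(a*k) with hK
    have hKpos : 0 < K := by positivity
    have hKR : (0:ℝ) < K := by exact_mod_cast hKpos
    have hKc : (2:ℝ)^(a*k) = K := by rw [hK]; push_cast; rfl
    have h2k : (0:ℝ) < 2^k := by positivity
    rw [hKc] at hδ
    simp only [hKc] at hr ih
    have hW1 : 1 ≤ W := one_le_pow₀ (by linarith)
    have hδ0 : 0 ≤ δ := by positivity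
    set j : Fin s := ⟨i, hi⟩ with hj
    -- the subinterval containing x j
    obtain ⟨r, hrK, hr1, hr2⟩ : ∃ r : ℕ, r < K ∧ (r : ℝ) / K ≤ x j ∧ x j ≤ (r : ℝ) / K + 1 / K := by
      rcases (hx j).2.lt_or_eq with h | h
      · have h0 := (hx j).1
        refine ⟨⌊x j * K⌋₊, ?_, ?_, ?_⟩
        · rw [Nat.floor_lt (by positivity)]; nlinarith
        · rw [div_le_iff₀ hKR]; exact Nat.floor_le (by positivity)
        · rw [← add_div, le_div_iff₀ hKR]; exact (Nat.lt_floor_add_one _).le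
      · refine ⟨K - 1, by omega, ?_, ?_⟩
        · rw [h, div_le_one hKR]; exact_mod_cast Nat.sub_le _ _
        · rw [h, ← add_div, le_div_iff₀ hKR, Nat.cast_sub hKpos]; simp
    have hsub : ∀ t ∈ Set.Icc ((r:ℝ)/K) ((r:ℝ)/K + 1/K), t ∈ Set.Icc (0:ℝ) 1 := by
      intro t ht
      refine ⟨le_trans (by positivity) ht.1, ht.2.trans ?_⟩
      rw [← add_div, div_le_one hKR]; exact_mod_cast hrK
    have hupd : ∀ t ∈ Set.Icc ((r:ℝ)/K) ((r:ℝ)/K + 1/K), ∀ l, Function.update x j t l ∈ Set.Icc (0:ℝ) 1 := by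
      intro t ht l
      by_cases h : l = j
      · subst h; simpa using hsub t ht
      · simpa [h] using hx l
    have hpt : ∀ m < 2^k, ((r * 2^k + m : ℕ) : ℝ) / (K * 2^k) ∈ Set.Icc ((r:ℝ)/K) ((r:ℝ)/K + 1/K) := by
      intro m hm
      have hm' : (m:ℝ) ≤ 2^k := by exact_mod_cast hm.le
      push_cast
      constructor
      · rw [div_le_div_iff₀ hKR (by positivity)]
        have : (0:ℝ) ≤ m * K := by positivity
        nlinarith
      · rw [← add_div, div_le_div_iff₀ (by positivity) hKR]
        have := mul_le_mul_of_nonneg_right hm' hKR.le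
        nlinarith
    have main := oneD (1/(K*2^k)) (1/K) (2*M) (by positivity) (by positivity) ((r:ℝ)/K) k
      (fun m t => (pd j)^[m] f (Function.update x j t) - (pd j)^[m] g (Function.update x j t))
      (fun m t => by
        have h1 := hasDerivAt_pd _ (hf.iter j m) x j t
        have h2 := hasDerivAt_pd _ (hg.iter j m) x j t
        simp only [Function.iterate_succ_apply']
        exact h1.sub h2)
      (i * W^i * δ) (by positivity) (fun m => ((r * 2^k + m : ℕ) : ℝ) / (K * 2^k)) hpt
      (by
        intro m hm
        apply le_of_eq
        push_cast; ring)
      (by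
        intro m hm
        refine ih _ (hupd _ (hpt m hm)) ?_
        intro l hl
        by_cases h : l = j
        · subst h
          refine ⟨⟨r * 2^k + m, ?_⟩, by simp⟩
          calc r * 2^k + m < r * 2^k + 2^k := by omega
            _ = (r+1) * 2^k := by ring
            _ ≤ K * 2^k := Nat.mul_le_mul_right _ hrK
        · have hne : (l : ℕ) ≠ i := fun e => h (Fin.ext e)
          obtain ⟨r', hr'⟩ := hr l (by omega)
          exact ⟨r', by simpa [h] using hr'⟩)
      (by
        intro t ht
        have h1 := bf j _ (hupd t ht)
        have h2 := bg j _ (hupd t ht)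
        exact (abs_sub _ _).trans (by linarith))
      (x j) ⟨hr1, hr2⟩
    simp only [Function.iterate_zero, id, Function.update_eq_self] at main
    have hRr : 2 * (1/(K:ℝ)) / (1/(K*2^k)) = 2 * 2^k := by field_simp
    rw [hRr, ← hW, ← hδ] at main
    refine main.trans ?_
    have h7 : 1 ≤ W^(i+1) := one_le_pow₀ hW1
    have h8 : δ ≤ W^(i+1) * δ := le_mul_of_one_le_left hδ0 h7
    push_cast
    calc W * (i * W^i * δ) + δ = i * W^(i+1) * δ + δ := by ring
      _ ≤ i * W^(i+1) * δ + W^(i+1) * δ := by linarith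
      _ = _ := by ring

lemma vol_cube (s : ℕ) : volume.real (unitCube s) = 1 := by
  rw [Measure.real, unitCube, Real.volume_pi_Ico]; simp

lemma minErr_le {s n k a : ℕ} (u : Fin s → ℝ) (hu : ∀ j, 0 < u j) (U : ℝ) (hU : ∀ j, u j ≤ U)
    (hU0 : 0 ≤ U) (hn : (2^(a*k) * 2^k)^s ≤ n) :
    minErr n s {f | MemS u f} (normS u) ≤ ENNReal.ofReal
      (s * ((1 + 2 * 2^k)^k)^s * ((1/2^(a*k))^k * (2*(U ^ k * ∏ i, (1 + u i))))) := by
  classical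
  set N := 2^(a*k) * 2^k with hN
  have hNpos : 0 < N := by positivity
  have : Nonempty (Fin s → Fin N) := ⟨fun _ => ⟨0, hNpos⟩⟩
  obtain ⟨e⟩ : Nonempty ((Fin s → Fin N) ↪ Fin n) :=
    Function.Embedding.nonempty_of_card_le (by simpa using hn)
  have hsur := Function.invFun_surjective e.injective
  set σ := Function.invFun e
  have hNc : ((2:ℝ)^(a*k) * 2^k) = N := by rw [hN]; push_cast; rfl
  have hNR : (0:ℝ) < N := by exact_mod_cast hNpos
  let t : Fin n → Fin s → ℝ := fun m j => (σ m j : ℝ) / N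
  have ht : ∀ m, t m ∈ unitCube s := by
    intro m j _
    refine ⟨by positivity, ?_⟩
    show (σ m j : ℝ) / N < 1
    rw [div_lt_one hNR]
    exact_mod_cast (σ m j).2
  let P : (Fin n → ℝ) → ((Fin s → ℝ) → ℝ) → Prop :=
    fun y g => MemS u g ∧ normS u g ≤ 1 ∧ (fun i => g (t i)) = y
  let φ : (Fin n → ℝ) → ℝ := fun y => if h : ∃ g, P y g then intBox s h.choose else 0
  refine iInf_le_of_le t (iInf_le_of_le ht (iInf_le_of_le φ ?_))
  refine iSup_le fun f => iSup_le fun hf => iSup_le fun hfn => ENNReal.ofReal_le_ofReal ?_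
  have hf : MemS u f := hf
  have hex : ∃ g, P (fun i => f (t i)) g := ⟨f, hf, hfn, rfl⟩
  have hφ : φ (fun i => f (t i)) = intBox s hex.choose := dif_pos hex
  obtain ⟨hg, hgn, hgt⟩ := hex.choose_spec
  beta_reduce
  rw [hφ]
  set g := hex.choose
  have hprod : 0 ≤ ∏ i, (1 + u i) := Finset.prod_nonneg fun i _ => by linarith [hu i]
  have bnd : ∀ h, MemS u h → normS u h ≤ 1 → ∀ j x, (∀ j, x j ∈ Set.Icc (0:ℝ) 1) →
      |(pd j)^[k] h x| ≤ U ^ k * ∏ i, (1 + u i) := by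
    intro h h1 h2 j x hx
    refine (supBound u hu h h1 h2 j k x hx).trans ?_
    exact mul_le_mul_of_nonneg_right (pow_le_pow_left₀ (hu j).le (hU j) k) hprod
  have key := gridBound f g hf.1 hg.1 k a (U ^ k * ∏ i, (1 + u i)) (by positivity)
    (bnd f hf hfn) (bnd g hg hgn)
    (by
      intro r
      obtain ⟨m, hm⟩ := hsur r
      have := congrFun hgt m
      simp only [t, hm] at this
      rw [hNc]
      exact this.symm) s le_rfl
  unfold intBox
  rw [← integral_sub (intOn hf.1.continuous) (intOn hg.1.continuous), ← Real.norm_eq_abs]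
  have := norm_setIntegral_le_of_norm_le_const (μ := volume) (s := unitCube s)
    (f := fun x => f x - g x) (C := s * ((1 + 2 * 2^k)^k)^s * ((1/2^(a*k))^k * (2*(U ^ k * ∏ i, (1 + u i)))))
    (by rw [unitCube, Real.volume_pi_Ico]; simp)
    (fun x hx => key x (fun j => Set.Ico_subset_Icc_self (hx j trivial))
      (fun j hj => absurd j.2 (by omega)))
  rwa [vol_cube, mul_one] at this

/-- super-polynomial convergence `e(n,s,S_{s,u}) ≤ c₅·exp(-c₆·(log n)²)`
for the space of smooth functions `S_{s,u}`. -/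
theorem statement3 (s : ℕ) (hs : 0 < s) (u : ℕ → ℝ) (hu : ∀ j, 0 < u j) (hmono : Antitone u) :
    ∃ c₅ c₆ : ℝ, 0 < c₅ ∧ 0 < c₆ ∧
      ∀ n : ℕ, 0 < n →
        minErr n s {f | MemS (fun j : Fin s => u j) f} (normS (fun j : Fin s => u j)) ≤
          ENNReal.ofReal (c₅ * Real.exp (-c₆ * (Real.log n) ^ 2)) := by
  obtain ⟨b, hb⟩ := pow_unbounded_of_one_lt (u 0) (one_lt_two (α := ℝ))
  set a := 3*s + b + 1 with ha
  set D := (a+1)*s with hD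
  have hDpos : 0 < D := by positivity
  have hDR : (0:ℝ) < D := by exact_mod_cast hDpos
  set C : ℝ := ∏ i : Fin s, (1 + u i) with hC
  have hCpos : 0 < C := Finset.prod_pos fun i _ => by linarith [hu i]
  have hsR : (0:ℝ) < s := by exact_mod_cast hs
  have hl2 : 0 < Real.log 2 := Real.log_pos one_lt_two
  refine ⟨4 * s * C, 1/(2*D^2*Real.log 2), by positivity, by positivity, ?_⟩
  intro n hn
  set k := Nat.log 2 n / D with hk
  have hkD : D * k ≤ Nat.log 2 n := Nat.mul_div_le _ _
  have hkn : (2^(a*k) * 2^k)^s ≤ n := by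
    calc (2^(a*k) * 2^k)^s = 2^(D*k) := by rw [← pow_add, ← pow_mul, hD]; congr 1; ring
      _ ≤ 2^(Nat.log 2 n) := Nat.pow_le_pow_right (by norm_num) hkD
      _ ≤ n := Nat.pow_log_le_self 2 hn.ne'
  refine (minErr_le (a := a) (fun j : Fin s => u j) (fun j => hu j) (2^b)
    (fun j => (hmono (Nat.zero_le _)).trans hb.le) (by positivity) hkn).trans ?_
  apply ENNReal.ofReal_le_ofReal
  have hk2 : k ≤ k^2 := Nat.le_self_pow (by norm_num) k
  have hW : ((1 + 2 * 2^k : ℝ)^k)^s ≤ 2^(3*s*k^2) := by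
    have h1 : (1 + 2 * 2^k : ℝ) ≤ 2^(k+2) := by
      have : (1:ℝ) ≤ 2^k := one_le_pow₀ one_le_two
      rw [pow_add]; linarith
    calc ((1 + 2 * 2^k : ℝ)^k)^s ≤ ((2^(k+2))^k)^s := by gcongr
      _ = 2^((k+2)*k*s) := by rw [← pow_mul, ← pow_mul, mul_assoc]
      _ ≤ 2^(3*s*k^2) := by
        apply pow_le_pow_right₀ one_le_two
        calc (k+2)*k*s = (k^2 + 2*k)*s := by ring
          _ ≤ (k^2+2*k^2)*s := by gcongr
          _ = _ := by ring
  have hUk : ((2:ℝ)^b)^k ≤ 2^(b*k^2) := by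
    rw [← pow_mul]; exact pow_le_pow_right₀ one_le_two (Nat.mul_le_mul_left _ hk2)
  have hA : ((1:ℝ)/2^(a*k))^k = 1/2^(a*k^2) := by
    rw [div_pow, one_pow, ← pow_mul]; congr 2; ring
  have hupper : s * ((1 + 2 * 2^k : ℝ)^k)^s * ((1/2^(a*k))^k * (2*((2^b) ^ k * C))) ≤
      2 * s * C * (1/2^(k^2)) := by
    rw [hA]
    calc s * ((1 + 2 * 2^k : ℝ)^k)^s * (1/2^(a*k^2) * (2*((2^b) ^ k * C)))
        ≤ s * 2^(3*s*k^2) * (1/2^(a*k^2) * (2*(2^(b*k^2) * C))) := by gcongr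
      _ = 2 * s * C * (1/2^(k^2)) := by
        have : (2:ℝ)^(a*k^2) = 2^(3*s*k^2) * 2^(b*k^2) * 2^(k^2) := by
          rw [← pow_add, ← pow_add, ha]; congr 1; ring
        rw [this]; field_simp
  refine hupper.trans ?_
  -- lower bound for exp
  have hlog : Real.log n ≤ D * (k+1) * Real.log 2 := by
    have h1 : n < 2^(D*(k+1)) := by
      have h2 : Nat.log 2 n < D*(k+1) := by
        rw [mul_comm]; exact Nat.lt_mul_of_div_lt (by omega) hDpos
      exact Nat.lt_pow_of_log_lt (by norm_num) h2
    have h3 : (n:ℝ) ≤ 2^(D*(k+1)) := by exact_mod_cast h1.le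
    have := Real.log_le_log (by exact_mod_cast hn) h3
    rw [Real.log_pow] at this
    push_cast at this
    exact this
  have hlog0 : 0 ≤ Real.log n := Real.log_natCast_nonneg n
  have hsq : (Real.log n)^2 ≤ D^2 * (2*k^2+2) * (Real.log 2)^2 := by
    calc (Real.log n)^2 ≤ (D * (k+1) * Real.log 2)^2 := by gcongr
      _ = D^2 * (k+1)^2 * (Real.log 2)^2 := by ring
      _ ≤ _ := by
        gcongr
        nlinarith [sq_nonneg ((k:ℝ)-1)]
  have hexp : 1/2^(k^2) ≤ 2 * Real.exp (-(1/(2*D^2*Real.log 2)) * (Real.log n)^2) := by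
    have h1 : 1/(2*D^2*Real.log 2) * (Real.log n)^2 ≤ (k^2+1) * Real.log 2 := by
      rw [div_mul_eq_mul_div, one_mul, div_le_iff₀ (by positivity)]
      refine hsq.trans (le_of_eq (by ring))
    have h2 : Real.exp (-((k^2+1) * Real.log 2)) = 1/2^(k^2) / 2 := by
      have : ((k:ℝ)^2+1) * Real.log 2 = Real.log (2^(k^2+1)) := by
        rw [Real.log_pow]; push_cast; rfl
      rw [this, Real.exp_neg, Real.exp_log (by positivity), pow_succ]
      field_simp
    have h3 := Real.exp_le_exp.2 (neg_le_neg h1)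
    rw [h2] at h3
    rw [neg_mul]
    linarith
  calc 2 * s * C * (1/2^(k^2)) ≤ 2 * s * C * (2 * Real.exp (-(1/(2*D^2*Real.log 2)) * (Real.log n)^2)) := by
        gcongr
    _ = _ := by ring

end
end

section
/- Let b ≥ 2 be an integer, s ∈ ℕ, and let a = (a_j)_{j≥1} be a nondecreasing sequence of real weights. Let 𝒜 be a finite subset of ℕ₀^s. Then for every n < |𝒜| one has e(n, s, W_{s,a}) ≥ ( max_{k, k* ∈ 𝒜} b^{μ_a(k ⊖ k*)} )^{−1}, where ⊖ denotes digitwise subtraction modulo b applied componentwise to the b-adic digits. -/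
open MeasureTheory Matrix Filter
open scoped ENNReal BigOperators Topology

noncomputable section

lemma natDigit_eq_zero {b k i : ℕ} (hb : 2 ≤ b) (h : k ≤ i) : natDigit b k i = 0 := by
  unfold natDigit
  have : k < b ^ i := lt_of_le_of_lt h (Nat.lt_pow_self (by omega))
  rw [Nat.div_eq_of_lt this, Nat.zero_mod]

lemma natDigit_lt {b k i : ℕ} (hb : 2 ≤ b) : natDigit b k i < b :=
  Nat.mod_lt _ (by omega)

lemma natDigit_succ (b k i : ℕ) : natDigit b k (i + 1) = natDigit b (k / b) i := by
  unfold natDigit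
  rw [pow_succ', Nat.div_div_eq_div_mul]

lemma natDigit_sum {b : ℕ} (hb : 2 ≤ b) (N : ℕ) : ∀ (d : ℕ → ℕ) (_ : ∀ i, d i < b) (j : ℕ),
    natDigit b (∑ i ∈ Finset.range N, d i * b ^ i) j = if j < N then d j else 0 := by
  induction N with
  | zero => intro d hd j; simp [natDigit]
  | succ N ih =>
    intro d hd j
    have h1 : ∑ i ∈ Finset.range (N + 1), d i * b ^ i
        = d 0 + b * (∑ i ∈ Finset.range N, d (i + 1) * b ^ i) := by
      rw [Finset.sum_range_succ', Finset.mul_sum, add_comm]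
      congr 1
      · simp
      · exact Finset.sum_congr rfl fun i _ => by ring
    rw [h1]
    cases j with
    | zero =>
      simp [natDigit, Nat.mod_eq_of_lt (hd 0)]
    | succ j =>
      rw [natDigit_succ, Nat.add_mul_div_left _ _ (by omega), Nat.div_eq_of_lt (hd 0), zero_add,
        ih (fun i => d (i + 1)) (fun i => hd _)]
      simp

lemma natDigit_dsub {b : ℕ} (hb : 2 ≤ b) (k k' i : ℕ) :
    natDigit b (dsub b k k') i = (natDigit b k i + (b - natDigit b k' i)) % b := by
  unfold dsub
  rw [natDigit_sum hb _ (fun i => (natDigit b k i + (b - natDigit b k' i)) % b)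
    (fun i => Nat.mod_lt _ (by omega))]
  split_ifs with h
  · rfl
  · rw [natDigit_eq_zero hb (by omega), natDigit_eq_zero hb (by omega)]
    simp

lemma cast_dsub {b : ℕ} (hb : 2 ≤ b) (k k' i : ℕ) :
    (natDigit b (dsub b k k') i : ZMod b) = natDigit b k i - natDigit b k' i := by
  rw [natDigit_dsub hb, ZMod.natCast_mod, Nat.cast_add, Nat.cast_sub (natDigit_lt hb).le]
  simp [sub_eq_add_neg]

lemma digit_ext' {b : ℕ} (hb : 2 ≤ b) (k : ℕ) : ∀ k' : ℕ,
    (∀ i, natDigit b k i = natDigit b k' i) → k = k' := by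
  induction k using Nat.strong_induction_on with
  | _ k ih =>
    intro k' h
    have h0 := h 0
    simp only [natDigit, pow_zero, Nat.div_one] at h0
    rcases Nat.eq_zero_or_pos k with rfl | hk
    · -- all digits of k' vanish
      by_contra hne
      have : ∀ m : ℕ, m ≠ 0 → ∃ i, natDigit b m i ≠ 0 := by
        intro m
        induction m using Nat.strong_induction_on with
        | _ m ihm =>
          intro hm
          by_cases h1 : m % b = 0
          · have h2 : m / b ≠ 0 := by
              intro h3
              have := Nat.div_add_mod m b
              rw [h3, h1] at this
              omega
            obtain ⟨i, hi⟩ := ihm (m / b) (Nat.div_lt_self (by omega) hb) h2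
            exact ⟨i + 1, by rwa [natDigit_succ]⟩
          · exact ⟨0, by simpa [natDigit] using h1⟩
      obtain ⟨i, hi⟩ := this k' (Ne.symm hne)
      apply hi
      rw [← h i]
      simp [natDigit]
    · have h1 : k / b = k' / b := ih (k / b) (Nat.div_lt_self hk hb) _ fun i => by
        rw [← natDigit_succ, ← natDigit_succ, h]
      rw [← Nat.div_add_mod k b, ← Nat.div_add_mod k' b, h1, h0]

lemma digit_ext {b : ℕ} (hb : 2 ≤ b) {k k' : ℕ}
    (h : ∀ i, (natDigit b k i : ZMod b) = natDigit b k' i) : k = k' := by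
  apply digit_ext' hb
  intro i
  have := (ZMod.natCast_eq_natCast_iff' _ _ _).1 (h i)
  rwa [Nat.mod_eq_of_lt (natDigit_lt hb), Nat.mod_eq_of_lt (natDigit_lt hb)] at this

@[simp] lemma natDigit_zero (b i : ℕ) : natDigit b 0 i = 0 := by simp [natDigit]

lemma dsub_left_inj {b : ℕ} (hb : 2 ≤ b) {k l m : ℕ} (h : dsub b k m = dsub b l m) : k = l := by
  apply digit_ext hb
  intro i
  have := congrArg (fun q => (natDigit b q i : ZMod b)) h
  simp only [cast_dsub hb] at this
  exact sub_left_injective this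

lemma dsub_self {b : ℕ} (hb : 2 ≤ b) (k : ℕ) : dsub b k k = 0 := by
  apply digit_ext hb
  intro i
  simp [cast_dsub hb]

lemma dsub_zero {b : ℕ} (hb : 2 ≤ b) (k : ℕ) : dsub b k 0 = k := by
  apply digit_ext hb
  intro i
  simp [cast_dsub hb]

lemma dneg_dneg {b : ℕ} (hb : 2 ≤ b) (k : ℕ) : dsub b 0 (dsub b 0 k) = k := by
  apply digit_ext hb
  intro i
  simp [cast_dsub hb]

lemma dickWt_eq {b : ℕ} (hb : 2 ≤ b) (a : ℝ) (k N : ℕ) (hN : k ≤ N) : dickWt b a k =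
    ∑ i ∈ Finset.range N, if (natDigit b k i : ZMod b) ≠ 0 then ((i : ℝ) + 1 + a) else 0 := by
  unfold dickWt
  have h0 : ∀ i, (natDigit b k i : ZMod b) ≠ 0 ↔ natDigit b k i ≠ 0 := by
    intro i
    rw [Ne, ZMod.natCast_eq_zero_iff, not_iff_not]
    exact ⟨fun h => Nat.eq_zero_of_dvd_of_lt h (natDigit_lt hb), fun h => by simp [h]⟩
  simp only [h0]
  apply Finset.sum_subset (Finset.range_subset_range.2 hN)
  intro i _ hi
  rw [natDigit_eq_zero hb (by simpa using hi)]
  simp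

lemma dickWt_dneg {b : ℕ} (hb : 2 ≤ b) (a : ℝ) (k : ℕ) :
    dickWt b a (dsub b 0 k) = dickWt b a k := by
  rw [dickWt_eq hb a k (k + dsub b 0 k) (by omega),
    dickWt_eq hb a (dsub b 0 k) (k + dsub b 0 k) (by omega)]
  simp [cast_dsub hb]

/-- The exponent of the Walsh function. -/
def wexp (b N k : ℕ) (x : ℝ) : ZMod b :=
  ∑ i ∈ Finset.range N, (natDigit b k i : ZMod b) * ((⌊x * (b : ℝ) ^ (i + 1)⌋ : ℤ) : ZMod b)

lemma realDigit_cast {b : ℕ} (hb : 2 ≤ b) (x : ℝ) (i : ℕ) :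
    (realDigit b x i : ZMod b) = ((⌊x * (b : ℝ) ^ (i + 1)⌋ : ℤ) : ZMod b) := by
  unfold realDigit
  have h : 0 ≤ ⌊x * (b : ℝ) ^ (i + 1)⌋ % (b : ℤ) := Int.emod_nonneg _ (by omega)
  have h2 : (((⌊x * (b : ℝ) ^ (i + 1)⌋ % (b : ℤ)).toNat : ℤ) : ZMod b)
      = ((⌊x * (b : ℝ) ^ (i + 1)⌋ : ℤ) : ZMod b) := by
    rw [Int.toNat_of_nonneg h, ZMod.intCast_mod]
  rw [← h2, Int.cast_natCast]

lemma wexp_eq {b : ℕ} (hb : 2 ≤ b) (N k : ℕ) (hN : k ≤ N) (x : ℝ) :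
    wexp b N k x = wexp b k k x := by
  unfold wexp
  symm
  apply Finset.sum_subset (Finset.range_subset_range.2 hN)
  intro i _ hi
  rw [natDigit_eq_zero hb (by simpa using hi)]
  simp

lemma wal1_eq {b : ℕ} [NeZero b] (hb : 2 ≤ b) (N k : ℕ) (hN : k ≤ N) (x : ℝ) :
    wal1 b k x = ZMod.stdAddChar (wexp b N k x) := by
  have h : wexp b N k x =
      (((∑ i ∈ Finset.range k, natDigit b k i * realDigit b x i : ℕ) : ℤ) : ZMod b) := by
    rw [wexp_eq hb N k hN]
    unfold wexp
    push_cast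
    simp only [realDigit_cast hb]
  rw [h, ZMod.stdAddChar_coe]
  unfold wal1
  congr 1
  rw [Int.cast_natCast]
  ring

lemma wal1_mul_conj {b : ℕ} (hb : 2 ≤ b) (k l : ℕ) (x : ℝ) :
    wal1 b k x * (starRingEnd ℂ) (wal1 b l x) = wal1 b (dsub b k l) x := by
  have : NeZero b := ⟨by omega⟩
  have hN := wal1_eq hb (k + l + dsub b k l) (k := k) (by omega) x
  have hN2 := wal1_eq hb (k + l + dsub b k l) (k := l) (by omega) x
  have hN3 := wal1_eq hb (k + l + dsub b k l) (k := dsub b k l) (by omega) x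
  rw [hN, hN2, hN3, ← AddChar.map_neg_eq_conj, ← AddChar.map_add_eq_mul]
  congr 1
  unfold wexp
  simp only [cast_dsub hb, sub_eq_add_neg, Finset.sum_add_distrib,
    add_mul, Finset.sum_neg_distrib, neg_mul]

@[simp] lemma wal1_zero (b : ℕ) (x : ℝ) : wal1 b 0 x = 1 := by simp [wal1]

lemma norm_wal1 {b : ℕ} (hb : 2 ≤ b) (k : ℕ) (x : ℝ) : ‖wal1 b k x‖ = 1 := by
  have : NeZero b := ⟨by omega⟩
  rw [wal1_eq hb k k le_rfl]
  exact AddChar.norm_apply _ _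

lemma measurable_wal1 (b k : ℕ) : Measurable (wal1 b k) := by
  unfold wal1
  have : Measurable fun x : ℝ => (∑ i ∈ Finset.range k, natDigit b k i * realDigit b x i : ℕ) := by
    apply Finset.measurable_sum
    intro i _
    apply Measurable.const_mul
    unfold realDigit
    have h1 : Measurable fun x : ℝ => ⌊x * (b : ℝ) ^ (i + 1)⌋ :=
      Int.measurable_floor.comp (measurable_id.mul_const _)
    exact (measurable_from_top (f := fun z : ℤ => (z % (b : ℤ)).toNat)).comp h1
  have h2 : Measurable fun m : ℕ => Complex.exp (2 * Real.pi * Complex.I / (b : ℂ) * (m : ℂ)) :=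
    measurable_from_top
  exact h2.comp this

lemma wal1_periodic {b : ℕ} (hb : 2 ≤ b) (k : ℕ) : Function.Periodic (wal1 b k) 1 := by
  have : NeZero b := ⟨by omega⟩
  intro x
  rw [wal1_eq hb k k le_rfl, wal1_eq hb k k le_rfl]
  congr 1
  unfold wexp
  refine Finset.sum_congr rfl fun i _ => ?_
  congr 1
  have : (x + 1) * (b : ℝ) ^ (i + 1) = x * (b : ℝ) ^ (i + 1) + ((b ^ (i + 1) : ℕ) : ℝ) := by
    push_cast; ring
  rw [this, Int.floor_add_natCast]
  simp

lemma wal1_shift {b : ℕ} [NeZero b] (hb : 2 ≤ b) (k r : ℕ) (hr : ∀ i < r, natDigit b k i = 0)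
    (x : ℝ) :
    wal1 b k (x + ((b : ℝ) ^ (r + 1))⁻¹) =
      ZMod.stdAddChar (natDigit b k r : ZMod b) * wal1 b k x := by
  rw [wal1_eq hb (k + r + 1) k (by omega), wal1_eq hb (k + r + 1) k (by omega),
    ← AddChar.map_add_eq_mul]
  congr 1
  unfold wexp
  have h1 : (natDigit b k r : ZMod b) = ∑ i ∈ Finset.range (k + r + 1),
      if i = r then (natDigit b k r : ZMod b) else 0 := by
    rw [Finset.sum_ite_eq']
    simp
  rw [h1, ← Finset.sum_add_distrib]
  refine Finset.sum_congr rfl fun i _ => ?_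
  rcases lt_or_ge i r with h | h
  · rw [hr i h]; simp [h.ne]
  · obtain ⟨m, rfl⟩ := Nat.exists_eq_add_of_le h
    have hb0 : (b : ℝ) ≠ 0 := by positivity
    have : (x + ((b : ℝ) ^ (r + 1))⁻¹) * (b : ℝ) ^ (r + m + 1)
        = x * (b : ℝ) ^ (r + m + 1) + ((b ^ m : ℕ) : ℝ) := by
      push_cast
      rw [add_mul]
      congr 1
      rw [show r + m + 1 = (r + 1) + m by ring, pow_add _ (r + 1) m, inv_mul_cancel_left₀ (by positivity)]
    rw [this, Int.floor_add_natCast]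
    rcases Nat.eq_zero_or_pos m with rfl | hm
    · simp; ring
    · have : m ≠ 0 := by omega
      simp [this]

lemma integral_wal1 {b : ℕ} (hb : 2 ≤ b) (k : ℕ) :
    ∫ x in Set.Ico (0 : ℝ) 1, wal1 b k x = if k = 0 then 1 else 0 := by
  have : NeZero b := ⟨by omega⟩
  split_ifs with hk
  · subst hk; simp
  · have hex : ∃ i, natDigit b k i ≠ 0 := by
      by_contra hcon
      push Not at hcon
      exact hk (digit_ext' hb k 0 fun i => by rw [hcon i]; simp)
    classical
    have hr := Nat.find_spec hex
    have hlt : ∀ i < Nat.find hex, natDigit b k i = 0 := fun i hi => by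
      simpa using Nat.find_min hex hi
    set r := Nat.find hex
    rw [MeasureTheory.integral_Ico_eq_integral_Ioc,
      ← intervalIntegral.integral_of_le zero_le_one]
    set I := ∫ x in (0 : ℝ)..1, wal1 b k x with hI
    have h1 : ∫ x in (0 : ℝ)..1, wal1 b k (x + ((b : ℝ) ^ (r + 1))⁻¹) = I := by
      rw [intervalIntegral.integral_comp_add_right]
      have := (wal1_periodic hb k).intervalIntegral_add_eq (((b : ℝ) ^ (r + 1))⁻¹) 0
      rw [zero_add] at this
      rw [zero_add, add_comm (1 : ℝ), this]
    simp only [wal1_shift hb k r hlt] at h1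
    rw [intervalIntegral.integral_const_mul] at h1
    have h2 : ZMod.stdAddChar (natDigit b k r : ZMod b) ≠ (1 : ℂ) := by
      intro h3
      rw [← AddChar.map_zero_eq_one (ZMod.stdAddChar (N := b)),
        ZMod.injective_stdAddChar.eq_iff, ZMod.natCast_eq_zero_iff] at h3
      exact hr (Nat.eq_zero_of_dvd_of_lt h3 (natDigit_lt hb))
    have h3 : (ZMod.stdAddChar (natDigit b k r : ZMod b) - 1) * I = 0 := by
      rw [sub_mul, one_mul]; exact sub_eq_zero.2 h1
    exact (mul_eq_zero.1 h3).resolve_left (sub_ne_zero.2 h2)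

/-- Componentwise digitwise subtraction. -/
def dsubV (b : ℕ) {s : ℕ} (k l : Fin s → ℕ) : Fin s → ℕ := fun j => dsub b (k j) (l j)

lemma wal_mul_conj {b s : ℕ} (hb : 2 ≤ b) (k l : Fin s → ℕ) (x : Fin s → ℝ) :
    wal b k x * (starRingEnd ℂ) (wal b l x) = wal b (dsubV b k l) x := by
  unfold wal dsubV
  rw [map_prod, ← Finset.prod_mul_distrib]
  exact Finset.prod_congr rfl fun j _ => wal1_mul_conj hb _ _ _

lemma wal_zero {b s : ℕ} (x : Fin s → ℝ) : wal b (0 : Fin s → ℕ) x = 1 := by simp [wal]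

lemma conj_wal {b s : ℕ} (hb : 2 ≤ b) (l : Fin s → ℕ) (x : Fin s → ℝ) :
    (starRingEnd ℂ) (wal b l x) = wal b (dsubV b 0 l) x := by
  rw [← wal_mul_conj hb, wal_zero, one_mul]

lemma dnegV_dnegV {b s : ℕ} (hb : 2 ≤ b) (k : Fin s → ℕ) : dsubV b 0 (dsubV b 0 k) = k := by
  funext j
  exact dneg_dneg hb (k j)

lemma dsubV_left_inj {b s : ℕ} (hb : 2 ≤ b) {k l m : Fin s → ℕ}
    (h : dsubV b k m = dsubV b l m) : k = l := by
  funext j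
  exact dsub_left_inj hb (congrFun h j)

lemma dsubV_self {b s : ℕ} (hb : 2 ≤ b) (k : Fin s → ℕ) : dsubV b k k = 0 := by
  funext j
  exact dsub_self hb (k j)

lemma dickWtV_dneg {b s : ℕ} (hb : 2 ≤ b) (a : Fin s → ℝ) (k : Fin s → ℕ) :
    dickWtV b a (dsubV b 0 k) = dickWtV b a k := by
  unfold dickWtV
  exact Finset.sum_congr rfl fun j _ => dickWt_dneg hb _ _

lemma integral_wal {b s : ℕ} (hb : 2 ≤ b) (k : Fin s → ℕ) :
    ∫ x in unitCube s, wal b k x = if k = 0 then 1 else 0 := by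
  unfold unitCube wal
  rw [volume_pi, Measure.restrict_pi_pi,
    integral_fintype_prod_eq_prod (f := fun j x => wal1 b (k j) x)]
  simp only [integral_wal1 hb]
  split_ifs with h
  · subst h; simp
  · obtain ⟨j, hj⟩ := Function.ne_iff.1 h
    exact Finset.prod_eq_zero (Finset.mem_univ j) (if_neg hj)

lemma integrable_wal {b s : ℕ} (hb : 2 ≤ b) (k : Fin s → ℕ) :
    Integrable (fun x => wal b k x) (volume.restrict (unitCube s)) := by
  unfold unitCube wal
  rw [volume_pi, Measure.restrict_pi_pi]
  refine Integrable.fintype_prod_dep (f := fun j x => wal1 b (k j) x) fun j => ?_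
  refine Integrable.of_bound (measurable_wal1 b (k j)).aestronglyMeasurable 1 ?_
  exact Filter.Eventually.of_forall fun x => (norm_wal1 hb _ _).le

lemma integral_wal_conj {b s : ℕ} (hb : 2 ≤ b) (k l : Fin s → ℕ) :
    ∫ x in unitCube s, wal b k x * (starRingEnd ℂ) (wal b l x) = if k = l then 1 else 0 := by
  simp only [wal_mul_conj hb]
  rw [integral_wal hb]
  congr 1
  rw [eq_iff_iff]
  constructor
  · intro h
    rw [← dsubV_self hb l] at h
    exact dsubV_left_inj hb h
  · rintro rfl
    exact dsubV_self hb k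

/-- A complex Walsh polynomial. -/
def wpoly (b : ℕ) {s : ℕ} (S : Finset (Fin s → ℕ)) (D : (Fin s → ℕ) → ℂ) (x : Fin s → ℝ) : ℂ :=
  ∑ p ∈ S, D p * wal b p x

lemma ofReal_re_wpoly {b s : ℕ} (hb : 2 ≤ b) (S : Finset (Fin s → ℕ)) (D : (Fin s → ℕ) → ℂ)
    (x : Fin s → ℝ) : (((wpoly b S D x).re : ℝ) : ℂ) =
      (∑ p ∈ S, D p * wal b p x +
        ∑ p ∈ S, (starRingEnd ℂ) (D p) * wal b (dsubV b 0 p) x) / 2 := by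
  rw [Complex.re_eq_add_conj]
  unfold wpoly
  simp only [map_sum, map_mul, conj_wal hb]

lemma walshCoeff_wpoly {b s : ℕ} (hb : 2 ≤ b) (S : Finset (Fin s → ℕ)) (D : (Fin s → ℕ) → ℂ)
    (hS : ∀ p ∉ S, D p = 0) (h : Fin s → ℕ) :
    walshCoeff b (fun x => (wpoly b S D x).re) h =
      (D h + (starRingEnd ℂ) (D (dsubV b 0 h))) / 2 := by
  have hint : ∀ (c : ℂ) (p : Fin s → ℕ), Integrable
      (fun x => c * (wal b p x * (starRingEnd ℂ) (wal b h x))) (volume.restrict (unitCube s)) := by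
    intro c p
    simp only [wal_mul_conj hb]
    exact (integrable_wal hb _).const_mul c
  have hval : ∀ (c : ℂ) (p : Fin s → ℕ),
      ∫ x in unitCube s, c * (wal b p x * (starRingEnd ℂ) (wal b h x))
        = if p = h then c else 0 := by
    intro c p
    rw [integral_const_mul, integral_wal_conj hb]
    simp
  unfold walshCoeff
  simp only [ofReal_re_wpoly hb, div_mul_eq_mul_div, add_mul, Finset.sum_mul, mul_assoc]
  rw [integral_div, integral_add (integrable_finsetSum _ fun p _ => hint _ _)
    (integrable_finsetSum _ fun p _ => hint _ _), integral_finsetSum _ fun p _ => hint _ _,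
    integral_finsetSum _ fun p _ => hint _ _]
  simp only [hval]
  congr 2
  · rw [Finset.sum_ite_eq']
    split_ifs with h1
    · rfl
    · exact (hS h h1).symm
  · have h2 : ∀ p, dsubV b 0 p = h ↔ p = dsubV b 0 h := fun p =>
      ⟨fun e => by rw [← e, dnegV_dnegV hb], fun e => by rw [e, dnegV_dnegV hb]⟩
    simp only [h2]
    rw [Finset.sum_ite_eq']
    split_ifs with h1
    · rfl
    · rw [hS _ h1, map_zero]

lemma hasSum_wpoly {b s : ℕ} (hb : 2 ≤ b) (S : Finset (Fin s → ℕ)) (D : (Fin s → ℕ) → ℂ)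
    (hS : ∀ p ∉ S, D p = 0) (x : Fin s → ℝ) :
    HasSum (fun k => walshCoeff b (fun x => (wpoly b S D x).re) k * wal b k x)
      (((wpoly b S D x).re : ℝ) : ℂ) := by
  simp only [walshCoeff_wpoly hb S D hS]
  have h1 : HasSum (fun p => D p * wal b p x) (wpoly b S D x) :=
    hasSum_sum_of_ne_finset_zero fun p hp => by rw [hS p hp, zero_mul]
  have h2 : HasSum (fun p => (starRingEnd ℂ) (D p * wal b p x))
      ((starRingEnd ℂ) (wpoly b S D x)) := h1.map (starRingEnd ℂ) Complex.continuous_conj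
  let e : (Fin s → ℕ) ≃ (Fin s → ℕ) :=
    ⟨dsubV b 0, dsubV b 0, dnegV_dnegV hb, dnegV_dnegV hb⟩
  have h3 := (e.hasSum_iff (f := fun p => (starRingEnd ℂ) (D p * wal b p x))).2 h2
  have h4 := (h1.add h3).div_const 2
  rw [Complex.re_eq_add_conj]
  have h5 : (fun k => (D k + (starRingEnd ℂ) (D (dsubV b 0 k))) / 2 * wal b k x) =
      fun i => (D i * wal b i x + ((fun p => (starRingEnd ℂ) (D p * wal b p x)) ∘ ⇑e) i) / 2 := by
    funext k
    simp only [Function.comp, map_mul, conj_wal hb, e, Equiv.coe_fn_mk, dnegV_dnegV hb]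
    ring
  rw [h5]
  exact h4

lemma bound_wpoly {b s : ℕ} (hb : 2 ≤ b) (a : Fin s → ℝ) (S : Finset (Fin s → ℕ))
    (D : (Fin s → ℕ) → ℂ) (hS : ∀ p ∉ S, D p = 0)
    (hD : ∀ p, ‖D p‖ * (b : ℝ) ^ dickWtV b a p ≤ 1) (h : Fin s → ℕ) :
    ‖walshCoeff b (fun x => (wpoly b S D x).re) h‖ * (b : ℝ) ^ dickWtV b a h ≤ 1 := by
  rw [walshCoeff_wpoly hb S D hS]
  have h1 := hD h
  have h2 := hD (dsubV b 0 h)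
  rw [dickWtV_dneg hb] at h2
  have h3 : ‖(D h + (starRingEnd ℂ) (D (dsubV b 0 h))) / 2‖
      ≤ (‖D h‖ + ‖D (dsubV b 0 h)‖) / 2 := by
    rw [norm_div]
    have := norm_add_le (D h) ((starRingEnd ℂ) (D (dsubV b 0 h)))
    rw [RCLike.norm_conj] at this
    simpa using div_le_div_of_nonneg_right this (by norm_num : (0 : ℝ) ≤ 2)
  have h4 : (0 : ℝ) ≤ (b : ℝ) ^ dickWtV b a h := by positivity
  nlinarith [mul_le_mul_of_nonneg_right h3 h4]

lemma intBox_wpoly {b s : ℕ} (hb : 2 ≤ b) (S : Finset (Fin s → ℕ))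
    (D : (Fin s → ℕ) → ℂ) (hS : ∀ p ∉ S, D p = 0) :
    intBox s (fun x => (wpoly b S D x).re) = (D 0).re := by
  have h := walshCoeff_wpoly hb S D hS 0
  rw [dsubV_self hb, ← Complex.re_eq_add_conj] at h
  unfold walshCoeff at h
  simp only [wal_zero, map_one, mul_one] at h
  rw [integral_complex_ofReal] at h
  exact_mod_cast h

lemma exists_coeff {s n : ℕ} (𝒜 : Finset (Fin s → ℕ)) (hn : n < 𝒜.card)
    (v : Fin n → (Fin s → ℕ) → ℂ) :
    ∃ c : (Fin s → ℕ) → ℂ, ∃ k ∈ 𝒜, c k = 1 ∧ (∀ l ∈ 𝒜, ‖c l‖ ≤ 1) ∧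
      ∀ i, ∑ l ∈ 𝒜, c l * v i l = 0 := by
  classical
  let L : (𝒜 → ℂ) →ₗ[ℂ] (Fin n → ℂ) :=
    LinearMap.pi fun i => ∑ l : 𝒜, (v i l) • LinearMap.proj l
  have hk : LinearMap.ker L ≠ ⊥ := L.ker_ne_bot_of_finrank_lt (by simpa using hn)
  obtain ⟨y, hy, hy0⟩ := (Submodule.ne_bot_iff _).mp hk
  obtain ⟨j, hj⟩ := Function.ne_iff.1 hy0
  have hne : (Finset.univ : Finset 𝒜).Nonempty := ⟨j, Finset.mem_univ j⟩
  obtain ⟨m, -, hm⟩ := Finset.exists_max_image Finset.univ (fun l => ‖y l‖) hne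
  have hm0 : 0 < ‖y m‖ := lt_of_lt_of_le (norm_pos_iff.2 hj) (hm j (Finset.mem_univ j))
  refine ⟨fun l => if h : l ∈ 𝒜 then y ⟨l, h⟩ / y m else 0, m, m.2, ?_, ?_, ?_⟩
  · simp [norm_pos_iff.1 hm0]
  · intro l hl
    simp only [hl, dif_pos, norm_div]
    exact (div_le_one hm0).2 (hm _ (Finset.mem_univ _))
  · intro i
    rw [← Finset.sum_coe_sort]
    have h1 := congrFun (LinearMap.mem_ker.1 hy) i
    simp only [L, LinearMap.pi_apply, LinearMap.sum_apply, LinearMap.smul_apply,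
      LinearMap.proj_apply, smul_eq_mul, Pi.zero_apply] at h1
    have h2 : ∑ l : 𝒜, (y l / y m) * v i l = (∑ l : 𝒜, v i l * y l) / y m := by
      rw [Finset.sum_div]
      exact Finset.sum_congr rfl fun l _ => by ring
    simp only [Finset.coe_mem, dif_pos, Subtype.coe_eta]
    rw [h2, h1, zero_div]

/-- for a finite set `𝒜 ⊆ ℕ₀^s` and `n < |𝒜|`,
`e(n, s, W_{s,a}) ≥ (max_{k,k* ∈ 𝒜} b^{μ_a(k ⊖ k*)})⁻¹`. -/
theorem statement5 (b : ℕ) (hb : 2 ≤ b) (s : ℕ) (hs : 0 < s) (a : ℕ → ℝ) (ha : Monotone a)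
    (𝒜 : Finset (Fin s → ℕ)) (h𝒜 : 𝒜.Nonempty) (n : ℕ) (hn : n < 𝒜.card) :
    ENNReal.ofReal
        ((𝒜.sup' h𝒜 fun k => 𝒜.sup' h𝒜 fun k' =>
          (b : ℝ) ^ dickWtV b (fun j : Fin s => a j) (fun j => dsub b (k j) (k' j)))⁻¹) ≤
      minErr n s {f | MemW b (fun j : Fin s => a j) f} (normW b (fun j : Fin s => a j)) := by
  classical
  set M := 𝒜.sup' h𝒜 fun k => 𝒜.sup' h𝒜 fun k' =>
          (b : ℝ) ^ dickWtV b (fun j : Fin s => a j) (fun j => dsub b (k j) (k' j)) with hMdef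
  have hM : ∀ k ∈ 𝒜, ∀ k' ∈ 𝒜,
      (b : ℝ) ^ dickWtV b (fun j : Fin s => a j) (dsubV b k k') ≤ M := by
    intro k hk k' hk'
    rw [hMdef, Finset.le_sup'_iff]
    refine ⟨k, hk, ?_⟩
    rw [Finset.le_sup'_iff]
    exact ⟨k', hk', le_of_eq rfl⟩
  clear_value M
  have hMpos : 0 < M := by
    obtain ⟨k, hk⟩ := h𝒜
    have hb0 : (0 : ℝ) < b := by exact_mod_cast (by omega : 0 < b)
    exact lt_of_lt_of_le (Real.rpow_pos_of_pos hb0 _) (hM k hk k hk)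
  unfold minErr
  refine le_iInf fun t => le_iInf fun _ => le_iInf fun φ => ?_
  obtain ⟨c, m, hm, hcm, hc1, hc0⟩ := exists_coeff 𝒜 hn fun i l => wal b l (t i)
  -- the fooling functions
  let S : Finset (Fin s → ℕ) := 𝒜.image fun k => dsubV b k m
  let D : ℝ → (Fin s → ℕ) → ℂ := fun σ p =>
    ∑ k ∈ 𝒜, if dsubV b k m = p then ((σ * M⁻¹ : ℝ) : ℂ) * c k else 0
  have hDS : ∀ σ, ∀ p ∉ S, D σ p = 0 := by
    intro σ p hp
    refine Finset.sum_eq_zero fun k hk => if_neg fun h => hp ?_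
    exact Finset.mem_image.2 ⟨k, hk, h⟩
  have hDv : ∀ σ, ∀ k ∈ 𝒜, D σ (dsubV b k m) = ((σ * M⁻¹ : ℝ) : ℂ) * c k := by
    intro σ k hk
    have : ∀ l, dsubV b l m = dsubV b k m ↔ l = k :=
      fun l => ⟨fun h => dsubV_left_inj hb h, fun h => by rw [h]⟩
    simp only [D, this]
    rw [Finset.sum_ite_eq', if_pos hk]
  have hDb : ∀ σ : ℝ, |σ| = 1 → ∀ p,
      ‖D σ p‖ * (b : ℝ) ^ dickWtV b (fun j : Fin s => a j) p ≤ 1 := by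
    intro σ hσ p
    by_cases hp : p ∈ S
    · obtain ⟨k, hk, rfl⟩ := Finset.mem_image.1 hp
      rw [hDv σ k hk, norm_mul, Complex.norm_real, Real.norm_eq_abs, abs_mul, hσ, one_mul,
        abs_of_pos (inv_pos.2 hMpos)]
      calc M⁻¹ * ‖c k‖ * (b : ℝ) ^ dickWtV b (fun j : Fin s => a j) (dsubV b k m)
          ≤ M⁻¹ * 1 * M := by
            gcongr
            · exact hc1 k hk
            · exact hM k hk m hm
        _ = 1 := by rw [mul_one, inv_mul_cancel₀ hMpos.ne']
    · rw [hDS σ p hp]; simp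
  have hz : ∀ σ i, (wpoly b S (D σ) (t i)).re = 0 := by
    intro σ i
    have : wpoly b S (D σ) (t i) = 0 := by
      unfold wpoly
      rw [Finset.sum_image fun k _ l _ h => dsubV_left_inj hb h]
      calc ∑ k ∈ 𝒜, D σ (dsubV b k m) * wal b (dsubV b k m) (t i)
          = ∑ k ∈ 𝒜, (((σ * M⁻¹ : ℝ) : ℂ) * (starRingEnd ℂ) (wal b m (t i))) *
              (c k * wal b k (t i)) := by
            refine Finset.sum_congr rfl fun k hk => ?_
            rw [hDv σ k hk, ← wal_mul_conj hb]
            ring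
        _ = 0 := by rw [← Finset.mul_sum, hc0 i, mul_zero]
    rw [this]; rfl
  have hI : ∀ σ, intBox s (fun x => (wpoly b S (D σ) x).re) = σ * M⁻¹ := by
    intro σ
    rw [intBox_wpoly hb S (D σ) (hDS σ), ← dsubV_self hb m, hDv σ m hm, hcm, mul_one,
      Complex.ofReal_re]
  have key : ∀ σ : ℝ, |σ| = 1 → ENNReal.ofReal |σ * M⁻¹ - φ (fun _ => 0)| ≤
      worstErr s {f | MemW b (fun j : Fin s => a j) f} (normW b (fun j : Fin s => a j))
        (fun f => φ fun i => f (t i)) := by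
    intro σ hσ
    have hbd := bound_wpoly hb (fun j : Fin s => a j) S (D σ) (hDS σ) (hDb σ hσ)
    have hmem : MemW b (fun j : Fin s => a j) (fun x => (wpoly b S (D σ) x).re) :=
      ⟨fun x _ => hasSum_wpoly hb S (D σ) (hDS σ) x, 1, by rintro _ ⟨h, rfl⟩; exact hbd h⟩
    have hnorm : normW b (fun j : Fin s => a j) (fun x => (wpoly b S (D σ) x).re) ≤ 1 :=
      ciSup_le hbd
    unfold worstErr
    refine le_trans ?_ (le_iSup₂_of_le (fun x => (wpoly b S (D σ) x).re) hmem
      (le_iSup_of_le hnorm le_rfl))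
    simp only [hI, hz]
    exact le_rfl
  rcases le_total (φ fun _ => 0) 0 with h | h
  · refine le_trans (ENNReal.ofReal_le_ofReal ?_) (key 1 (by simp))
    exact le_trans (by linarith) (le_abs_self _)
  · refine le_trans (ENNReal.ofReal_le_ofReal ?_) (key (-1) (by simp))
    exact le_trans (by linarith) (neg_le_abs _)

end
end
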